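/- Operator norm of the graph map (step in the proof of Lemma 6.2): Let E and G be real normed vector spaces with E ≠ {0}, and let F : E → G be a continuous linear map. Equip E × G with the ℓ²-product norm ‖(x,y)‖ = sqrt(‖x‖² + ‖y‖²). Then the continuous linear map Θ : E → E × G defined by Θ(v) = (v, F v) has operator norm ‖Θ‖ = sqrt(1 + ‖F‖²), where ‖F‖ denotes the operator norm of F. -/

import Mathlib

/-!
For `Θ v = (v, F v)` the ℓ²-norm gives the exact identity `‖Θ v‖² = ‖v‖² + ‖F v‖²`.
Bounding `‖F v‖ ≤ ‖F‖ ‖v‖` yields `‖Θ‖ ≤ √(1 + ‖F‖²)`. Conversely, `‖Θ v‖ ≤ ‖Θ‖ ‖v‖` reads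
`‖F v‖² ≤ (‖Θ‖² - 1) ‖v‖²`. A nonzero `v` shows `‖Θ‖² - 1 ≥ 0`, so its square root is an
admissible bound for `F`, and `‖F‖² ≤ ‖Θ‖² - 1`.
-/

/-- Operator norm of the graph map: for a continuous linear map `F : E → G` with `E ≠ {0}`,
the map `Θ : E → E ×₂ G`, `v ↦ (v, F v)`, into the ℓ²-product has operator norm
`sqrt (1 + ‖F‖²)`. -/
theorem opNorm_graph_map {E G : Type*} [NormedAddCommGroup E] [NormedSpace ℝ E]
    [NormedAddCommGroup G] [NormedSpace ℝ G] [Nontrivial E] (F : E →L[ℝ] G) :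
    ‖((WithLp.prodContinuousLinearEquiv 2 ℝ E G).symm.toContinuousLinearMap.comp
        ((ContinuousLinearMap.id ℝ E).prod F))‖ = Real.sqrt (1 + ‖F‖ ^ 2) := by
  set T := ((WithLp.prodContinuousLinearEquiv 2 ℝ E G).symm.toContinuousLinearMap.comp
        ((ContinuousLinearMap.id ℝ E).prod F))
  have key (v : E) : ‖T v‖ ^ 2 = ‖v‖ ^ 2 + ‖F v‖ ^ 2 := WithLp.prod_norm_sq_eq_of_L2 (T v)
  apply le_antisymm
  · refine T.opNorm_le_bound (Real.sqrt_nonneg _) fun v => ?_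
    refine (sq_le_sq₀ (norm_nonneg _) (by positivity)).mp ?_
    rw [key, mul_pow, Real.sq_sqrt (by positivity)]
    have h := pow_le_pow_left₀ (norm_nonneg _) (F.le_opNorm v) 2
    linarith [mul_pow ‖F‖ ‖v‖ 2]
  · have hF (v : E) : ‖F v‖ ^ 2 ≤ (‖T‖ ^ 2 - 1) * ‖v‖ ^ 2 := by
      have h := pow_le_pow_left₀ (norm_nonneg _) (T.le_opNorm v) 2
      rw [key, mul_pow] at h
      linarith
    have hT1 : 0 ≤ ‖T‖ ^ 2 - 1 := by
      obtain ⟨v, hv⟩ := exists_ne (0 : E)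
      have hv2 : 0 < ‖v‖ ^ 2 := pow_pos (norm_pos_iff.mpr hv) 2
      exact nonneg_of_mul_nonneg_left ((sq_nonneg _).trans (hF v)) hv2
    have hle : ‖F‖ ≤ Real.sqrt (‖T‖ ^ 2 - 1) := by
      refine F.opNorm_le_bound (Real.sqrt_nonneg _) fun v => ?_
      refine (sq_le_sq₀ (norm_nonneg _) (by positivity)).mp ?_
      rw [mul_pow, Real.sq_sqrt hT1]
      exact hF v
    have h2 := pow_le_pow_left₀ (norm_nonneg _) hle 2
    rw [Real.sq_sqrt hT1] at h2
    exact Real.sqrt_le_iff.mpr ⟨norm_nonneg _, by linarith⟩
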